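/- With W and D as in the DGA (W, D) above, the kernel of D is the ℤ/2-subalgebra of W generated by x_2, x_3, x_8, x_{12}, x_5², and x_3²x_9 + x_5³. -/

import Mathlib

open MvPolynomial

-- Variables: X 0 = x_2, X 1 = x_3, X 2 = x_5, X 3 = x_8, X 4 = x_9, X 5 = x_12.

noncomputable def Jid : Ideal (MvPolynomial (Fin 6) (ZMod 2)) :=
  Ideal.span {X 0 * X 1, X 0 * X 2, X 0 * X 4,
    X 4 ^ 2 + X 1 ^ 2 * X 5 + X 2 ^ 2 * X 3 + X 1 ^ 3 * X 4 + X 1 * X 2 ^ 3}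

abbrev W : Type := MvPolynomial (Fin 6) (ZMod 2) ⧸ Jid

noncomputable def Dder :
    Derivation (ZMod 2) (MvPolynomial (Fin 6) (ZMod 2)) (MvPolynomial (Fin 6) (ZMod 2)) :=
  mkDerivation (ZMod 2) ![0, 0, X 1 ^ 2, 0, X 2 ^ 2, 0]

/-! Let `R = 𝔽₂[x₃, x₅², x₈, x₁₂]`. Since `x₂` annihilates `x₃`, `x₅` and `x₉`, the derivation kills
the ideal `(x₂)`, and modulo that ideal `W` is free over `R` on `1`, `x₅`, `x₉`, `x₅ x₉`. As `D` is
`R`-linear with `D x₅ = x₃²` and `D x₉ = x₅²`, applying it to `u₀ + u₁ x₅ + v₀ x₉ + v₁ x₅ x₉` gives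
`(u₁ x₃² + v₀ x₅²) + v₁ x₅² x₅ + v₁ x₃² x₉`. This vanishes only if `v₁ = 0` and
`u₁ x₃² = -v₀ x₅²`; because `x₃²` and `x₅²` are coprime in `R`, the solutions of the latter are the
multiples of `(x₅², x₃²)`, which correspond to the `R`-multiples of `x₃² x₉ + x₅³`. -/

section Syzygy

variable {k R A : Type*} [CommRing R] [IsDomain R] [DecompositionMonoid R]

lemma exists_syzygy_of_isRelPrime {p q u v : R} (hp : p ≠ 0) (hpq : IsRelPrime p q)
    (h : u * p + v * q = 0) : ∃ s, u = -(s * q) ∧ v = s * p := by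
  have hdvd : p ∣ v * q := ⟨-u, by linear_combination h⟩
  obtain ⟨s, rfl⟩ := hpq.dvd_of_dvd_mul_right hdvd
  refine ⟨s, mul_left_cancel₀ hp ?_, mul_comm p s⟩
  linear_combination h

variable [CommRing k] [CommRing A] [Algebra k A] [Algebra R A]

theorem exists_smul_eq_of_derivation_eq_zero (D : Derivation k A A)
    (hR : ∀ r : R, D (algebraMap R A r) = 0) {p q : R} {c n : A} (hc : D c = algebraMap R A p)
    (hn : D n = algebraMap R A q) (hli : LinearIndependent R ![1, c, n]) (hp : p ≠ 0)
    (hpq : IsRelPrime p q) {u₁ v₀ v₁ : R} (h : D (u₁ • c + v₀ • n + v₁ • (c * n)) = 0) :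
    ∃ s : R, u₁ • c + v₀ • n + v₁ • (c * n) = s • (p • n - q • c) := by
  have hD_smul (r : R) (a : A) : D (r • a) = r • D a := by
    rw [Algebra.smul_def, D.leibniz, hR, smul_zero, add_zero, smul_eq_mul, ← Algebra.smul_def]
  have hcomb : (u₁ * p + v₀ * q) • (1 : A) + (v₁ * q) • c + (v₁ * p) • n = 0 := by
    simp only [map_add, hD_smul, D.leibniz, hc, hn, smul_eq_mul] at h
    simp only [Algebra.smul_def, map_add, map_mul] at h ⊢
    linear_combination h
  have hcoeff := Fintype.linearIndependent_iff.1 hli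
    ![u₁ * p + v₀ * q, v₁ * q, v₁ * p] (by simpa [Fin.sum_univ_three] using hcomb)
  have hv₁ : v₁ = 0 := (mul_eq_zero.1 (hcoeff 2)).resolve_right hp
  obtain ⟨s, rfl, rfl⟩ := exists_syzygy_of_isRelPrime hp hpq (hcoeff 0)
  refine ⟨s, ?_⟩
  rw [hv₁, smul_sub, smul_smul, smul_smul, neg_smul, zero_smul]
  abel

end Syzygy

lemma linearIndependent_quadraticAlgebra_tower {R : Type*} [CommRing R] (a b : R)
    (c d : QuadraticAlgebra R a b) :
    LinearIndependent R ![(1 : QuadraticAlgebra (QuadraticAlgebra R a b) c d),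
      algebraMap (QuadraticAlgebra R a b) _ .omega, .omega] := by
  rw [Fintype.linearIndependent_iff]
  intro g hg
  rw [Fin.sum_univ_three] at hg
  have h₀ := congrArg (fun z => z.re.re) hg
  have h₁ := congrArg (fun z => z.re.im) hg
  have h₂ := congrArg (fun z => z.im.re) hg
  rw [Fin.forall_fin_succ, Fin.forall_fin_two]
  exact ⟨by simpa [QuadraticAlgebra.re_one] using h₀,
    by simpa [QuadraticAlgebra.re_one, QuadraticAlgebra.im_one] using h₁,
    by simpa [QuadraticAlgebra.re_one, QuadraticAlgebra.im_one] using h₂⟩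

lemma exists_quadratic_tower.{u} {R : Type u} [CommRing R] (q a₀ a₁ b : R) :
    ∃ (A : Type u) (_ : CommRing A) (_ : Algebra R A) (c n : A), c ^ 2 = algebraMap R A q ∧
      n ^ 2 = algebraMap R A a₀ + algebraMap R A a₁ * c + algebraMap R A b * n ∧
      LinearIndependent R ![1, c, n] := by
  let B := QuadraticAlgebra R q 0
  let A := QuadraticAlgebra B (algebraMap R B a₀ + algebraMap R B a₁ * .omega) (algebraMap R B b)
  refine ⟨A, inferInstance, inferInstance, algebraMap B A .omega, .omega, ?_, ?_,
    linearIndependent_quadraticAlgebra_tower q 0 _ _⟩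
  · rw [sq, ← map_mul, QuadraticAlgebra.omega_mul_omega_eq_algebraMap, map_zero, zero_mul,
      add_zero, ← IsScalarTower.algebraMap_apply]
  · rw [sq, QuadraticAlgebra.omega_mul_omega_eq_algebraMap, map_add, map_mul,
      ← IsScalarTower.algebraMap_apply, ← IsScalarTower.algebraMap_apply,
      ← IsScalarTower.algebraMap_apply]

theorem derivation_mem_span_of_forall_mem {k A : Type*} [CommSemiring k] [CommSemiring A]
    [Algebra k A] (D : Derivation k A A) {s : Set A} (hs : ∀ a ∈ s, D a ∈ Ideal.span s) {a : A}
    (ha : a ∈ Ideal.span s) : D a ∈ Ideal.span s := by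
  induction ha using Submodule.span_induction with
  | mem a ha => exact hs a ha
  | zero => rw [map_zero]; exact zero_mem _
  | add a b _ _ hDa hDb => rw [map_add]; exact add_mem hDa hDb
  | smul c a ha hDa =>
    rw [smul_eq_mul, D.leibniz]
    exact add_mem (Ideal.mul_mem_left _ c hDa) (Ideal.mul_mem_right _ _ ha)

lemma isRelPrime_X_X_of_ne {σ R : Type*} [CommRing R] [IsDomain R] {i j : σ} (hij : i ≠ j) :
    IsRelPrime (X i : MvPolynomial σ R) (X j) := by
  rwa [X_prime.irreducible.isRelPrime_iff_not_dvd, X_dvd_X]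

namespace W

local notation "x₂" => Ideal.Quotient.mk Jid (X 0)
local notation "x₃" => Ideal.Quotient.mk Jid (X 1)
local notation "x₅" => Ideal.Quotient.mk Jid (X 2)
local notation "x₈" => Ideal.Quotient.mk Jid (X 3)
local notation "x₉" => Ideal.Quotient.mk Jid (X 4)
local notation "x₁₂" => Ideal.Quotient.mk Jid (X 5)

lemma x₂_mul_x₅ : x₂ * x₅ = 0 :=
  Ideal.Quotient.eq_zero_iff_mem.2 (Ideal.subset_span (by simp))

lemma x₂_mul_x₉ : x₂ * x₉ = 0 :=
  Ideal.Quotient.eq_zero_iff_mem.2 (Ideal.subset_span (by simp))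

lemma quartic_relation :
    x₉ ^ 2 + x₃ ^ 2 * x₁₂ + x₅ ^ 2 * x₈ + x₃ ^ 3 * x₉ + x₃ * x₅ ^ 3 = 0 :=
  Ideal.Quotient.eq_zero_iff_mem.2 (Ideal.subset_span (by simp))

lemma aeval_eq_zero_of_mem_Jid {A : Type*} [CommRing A] [Algebra (ZMod 2) A] {g : Fin 6 → A}
    (h₀₁ : g 0 * g 1 = 0) (h₀₂ : g 0 * g 2 = 0) (h₀₄ : g 0 * g 4 = 0)
    (h : g 4 ^ 2 + g 1 ^ 2 * g 5 + g 2 ^ 2 * g 3 + g 1 ^ 3 * g 4 + g 1 * g 2 ^ 3 = 0)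
    {f : MvPolynomial (Fin 6) (ZMod 2)} (hf : f ∈ Jid) : aeval g f = 0 := by
  suffices Jid ≤ RingHom.ker (aeval (R := ZMod 2) g) from this hf
  rw [Jid, Ideal.span_le]
  rintro _ (rfl | rfl | rfl | rfl)
  · simpa using h₀₁
  · simpa using h₀₂
  · simpa using h₀₄
  · simpa using h

lemma two_eq_zero : (2 : W) = 0 := by
  rw [← one_add_one_eq_two, ZModModule.add_self]

lemma Dder_X (i : Fin 6) : Dder (X i) = ![0, 0, X 1 ^ 2, 0, X 2 ^ 2, 0] i :=
  mkDerivation_X ..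

lemma Dder_mem_Jid {f : MvPolynomial (Fin 6) (ZMod 2)} (hf : f ∈ Jid) : Dder f ∈ Jid := by
  refine derivation_mem_span_of_forall_mem Dder ?_ hf
  rintro _ (rfl | rfl | rfl | rfl)
  · have h : Dder (X 0 * X 1) = 0 := by simp [Dder_X]
    rw [h]
    exact zero_mem _
  · have h : Dder (X 0 * X 2) = X 0 * X 1 * X 1 := by simp [Dder_X, sq, mul_assoc]
    rw [h]
    exact Ideal.mul_mem_right _ _ (Ideal.subset_span (by simp))
  · have h : Dder (X 0 * X 4) = X 0 * X 2 * X 2 := by simp [Dder_X, sq, mul_assoc]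
    rw [h]
    exact Ideal.mul_mem_right _ _ (Ideal.subset_span (by simp))
  · have h : Dder (X 4 ^ 2 + X 1 ^ 2 * X 5 + X 2 ^ 2 * X 3 + X 1 ^ 3 * X 4 + X 1 * X 2 ^ 3) =
        0 := by
      simp only [map_add, Derivation.leibniz, Derivation.leibniz_pow, Dder_X, Matrix.cons_val,
        smul_eq_mul, nsmul_eq_mul]
      linear_combination (X 4 * X 2 ^ 2 + X 3 * X 2 * X 1 ^ 2 + 2 * X 1 ^ 3 * X 2 ^ 2) *
        (CharTwo.two_eq_zero : (2 : MvPolynomial (Fin 6) (ZMod 2)) = 0)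
    rw [h]
    exact zero_mem _

/-- The derivation `D` of `W`. -/
noncomputable def D : Derivation (ZMod 2) W W :=
  .liftOfSurjective (f := Ideal.Quotient.mkₐ (ZMod 2) Jid)
    (Ideal.Quotient.mkₐ_surjective (ZMod 2) Jid) (d := Dder) fun _ hf =>
      Ideal.Quotient.eq_zero_iff_mem.2 (Dder_mem_Jid (Ideal.Quotient.eq_zero_iff_mem.1 hf))

lemma D_mk (f : MvPolynomial (Fin 6) (ZMod 2)) :
    D (Ideal.Quotient.mk Jid f) = Ideal.Quotient.mk Jid (Dder f) := by
  rw [D]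
  exact Derivation.liftOfSurjective_apply (f := Ideal.Quotient.mkₐ (ZMod 2) Jid)
    (Ideal.Quotient.mkₐ_surjective (ZMod 2) Jid) _ f

lemma D_mk_X (i : Fin 6) :
    D (Ideal.Quotient.mk Jid (X i)) = ![0, 0, x₃ ^ 2, 0, x₅ ^ 2, 0] i := by
  rw [D_mk, Dder_X]
  fin_cases i <;> simp

lemma D_x₃ : D x₃ = 0 := D_mk_X 1

lemma D_x₅ : D x₅ = x₃ ^ 2 := D_mk_X 2

lemma D_x₉ : D x₉ = x₅ ^ 2 := D_mk_X 4

/-- The subalgebra of `W` that the theorem identifies with the kernel of `D`. -/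
noncomputable def kernelSubalgebra : Subalgebra (ZMod 2) W :=
  Algebra.adjoin (ZMod 2)
    {x₂, x₃, x₈, x₁₂, Ideal.Quotient.mk Jid (X 2 ^ 2),
      Ideal.Quotient.mk Jid (X 1 ^ 2 * X 4 + X 2 ^ 3)}

lemma D_eq_zero_of_mem_kernelSubalgebra {w : W} (hw : w ∈ kernelSubalgebra) : D w = 0 := by
  refine Derivation.eqOn_adjoin (D2 := 0) ?_ hw
  rintro x (rfl | rfl | rfl | rfl | rfl | rfl)
  · exact D_mk_X 0
  · exact D_x₃
  · exact D_mk_X 3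
  · exact D_mk_X 5
  · simp only [map_pow, D.leibniz_pow, D_x₅, Derivation.zero_apply, smul_eq_mul, nsmul_eq_mul]
    linear_combination x₅ * x₃ ^ 2 * two_eq_zero
  · simp only [map_add, map_mul, map_pow, D.leibniz, D.leibniz_pow, D_x₃, D_x₅, D_x₉,
      Derivation.zero_apply, smul_eq_mul, nsmul_eq_mul]
    linear_combination 2 * x₅ ^ 2 * x₃ ^ 2 * two_eq_zero

lemma x₂_mul_mem_kernelSubalgebra (w : W) : x₂ * w ∈ kernelSubalgebra := by
  obtain ⟨f, rfl⟩ := Ideal.Quotient.mk_surjective w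
  induction f using MvPolynomial.induction_on with
  | C a =>
    exact mul_mem (Algebra.subset_adjoin (by simp)) (kernelSubalgebra.algebraMap_mem a)
  | add f g hf hg => simpa only [map_add, mul_add] using add_mem hf hg
  | mul_X f i hf =>
    rw [map_mul, ← mul_assoc]
    by_cases hi : i = 2 ∨ i = 4
    · convert zero_mem kernelSubalgebra using 1
      rcases hi with rfl | rfl
      · linear_combination Ideal.Quotient.mk Jid f * x₂_mul_x₅
      · linear_combination Ideal.Quotient.mk Jid f * x₂_mul_x₉
    · refine mul_mem hf (Algebra.subset_adjoin ?_)
      fin_cases i <;> simp_all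

/-- The polynomial ring `R = 𝔽₂[x₃, x₅², x₈, x₁₂]`, with its variables in this order. -/
abbrev CoeffRing : Type := MvPolynomial (Fin 4) (ZMod 2)

noncomputable instance : Algebra CoeffRing W :=
  (aeval (R := ZMod 2) ![x₃, x₅ ^ 2, x₈, x₁₂]).toAlgebra

lemma algebraMap_X (i : Fin 4) : algebraMap CoeffRing W (X i) = ![x₃, x₅ ^ 2, x₈, x₁₂] i :=
  aeval_X _ i

lemma algebraMap_mem_kernelSubalgebra (r : CoeffRing) :
    algebraMap CoeffRing W r ∈ kernelSubalgebra := by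
  have hr : aeval ![x₃, x₅ ^ 2, x₈, x₁₂] r ∈
      Algebra.adjoin (ZMod 2) (Set.range ![x₃, x₅ ^ 2, x₈, x₁₂]) := by
    rw [Algebra.adjoin_range_eq_range_aeval]
    exact ⟨r, rfl⟩
  refine Algebra.adjoin_mono ?_ hr
  rintro _ ⟨i, rfl⟩
  fin_cases i <;> simp

lemma exists_normal_form (w : W) : ∃ (y : W) (u₀ u₁ v₀ v₁ : CoeffRing),
    w = x₂ * y + algebraMap CoeffRing W u₀ + (u₁ • x₅ + v₀ • x₉ + v₁ • (x₅ * x₉)) := by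
  simp only [Algebra.smul_def]
  obtain ⟨f, rfl⟩ := Ideal.Quotient.mk_surjective w
  induction f using MvPolynomial.induction_on with
  | C a =>
    refine ⟨0, C a, 0, 0, 0, ?_⟩
    have hC : Ideal.Quotient.mk Jid (C a) = algebraMap CoeffRing W (C a) :=
      (aeval_C ![x₃, x₅ ^ 2, x₈, x₁₂] a).symm
    simp [hC]
  | add f g hf hg =>
    obtain ⟨y, u₀, u₁, v₀, v₁, hf⟩ := hf
    obtain ⟨y', u₀', u₁', v₀', v₁', hg⟩ := hg
    refine ⟨y + y', u₀ + u₀', u₁ + u₁', v₀ + v₀', v₁ + v₁', ?_⟩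
    simp only [map_add, hf, hg]
    ring
  | mul_X f i hf =>
    obtain ⟨y, u₀, u₁, v₀, v₁, hf⟩ := hf
    fin_cases i
    · refine ⟨Ideal.Quotient.mk Jid f, 0, 0, 0, 0, ?_⟩
      simp [mul_comm]
    · refine ⟨y * x₃, u₀ * X 0, u₁ * X 0, v₀ * X 0, v₁ * X 0, ?_⟩
      simp only [map_mul, algebraMap_X, Matrix.cons_val, Fin.mk_one]
      linear_combination x₃ * hf
    · refine ⟨y * x₅, u₁ * X 1, u₀, v₁ * X 1, v₀, ?_⟩
      simp only [map_mul, algebraMap_X, Matrix.cons_val, Fin.reduceFinMk]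
      linear_combination x₅ * hf
    · refine ⟨y * x₈, u₀ * X 2, u₁ * X 2, v₀ * X 2, v₁ * X 2, ?_⟩
      simp only [map_mul, algebraMap_X, Matrix.cons_val, Fin.reduceFinMk]
      linear_combination x₈ * hf
    · refine ⟨y * x₉, -(v₀ * (X 0 ^ 2 * X 3 + X 1 * X 2) + v₁ * X 0 * X 1 ^ 2),
        -(v₀ * X 0 * X 1 + v₁ * (X 0 ^ 2 * X 3 + X 1 * X 2)),
        u₀ - v₀ * X 0 ^ 3, u₁ - v₁ * X 0 ^ 3, ?_⟩
      simp only [map_mul, map_add, map_sub, map_neg, map_pow, algebraMap_X, Matrix.cons_val,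
        Fin.reduceFinMk]
      linear_combination x₉ * hf + (algebraMap CoeffRing W v₀ + algebraMap CoeffRing W v₁ * x₅) *
        quartic_relation
    · refine ⟨y * x₁₂, u₀ * X 3, u₁ * X 3, v₀ * X 3, v₁ * X 3, ?_⟩
      simp only [map_mul, algebraMap_X, Matrix.cons_val, Fin.reduceFinMk]
      linear_combination x₁₂ * hf

lemma exists_algHom_of_sq_eq {A : Type*} [CommRing A] [Algebra (ZMod 2) A] [Algebra CoeffRing A]
    [IsScalarTower (ZMod 2) CoeffRing A] {c n : A} (hc : c ^ 2 = algebraMap CoeffRing A (X 1))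
    (hn : n ^ 2 = algebraMap CoeffRing A (-(X 0 ^ 2 * X 3 + X 1 * X 2)) +
      algebraMap CoeffRing A (-(X 0 * X 1)) * c + algebraMap CoeffRing A (-X 0 ^ 3) * n) :
    ∃ φ : W →ₐ[CoeffRing] A, φ x₅ = c ∧ φ x₉ = n := by
  let g : Fin 6 → A := ![0, algebraMap CoeffRing A (X 0), c, algebraMap CoeffRing A (X 2), n,
    algebraMap CoeffRing A (X 3)]
  have hrel : g 4 ^ 2 + g 1 ^ 2 * g 5 + g 2 ^ 2 * g 3 + g 1 ^ 3 * g 4 + g 1 * g 2 ^ 3 = 0 := by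
    simp only [map_neg, map_add, map_mul, map_pow, ← hc] at hn
    simp only [g, Matrix.cons_val]
    linear_combination hn
  let φ : W →ₐ[ZMod 2] A := Ideal.Quotient.liftₐ Jid (aeval g) fun _ =>
    aeval_eq_zero_of_mem_Jid (zero_mul _) (zero_mul _) (zero_mul _) hrel
  have hφ (i : Fin 6) : φ (Ideal.Quotient.mk Jid (X i)) = g i := aeval_X g i
  have hφ_coeff : φ.comp (aeval ![x₃, x₅ ^ 2, x₈, x₁₂]) =
      IsScalarTower.toAlgHom (ZMod 2) CoeffRing A := by
    ext i : 1
    rw [AlgHom.comp_apply, aeval_X, IsScalarTower.coe_toAlgHom']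
    fin_cases i
    · exact hφ 1
    · exact (map_pow φ x₅ 2).trans ((congrArg (· ^ 2) (hφ 2)).trans hc)
    · exact hφ 3
    · exact hφ 5
  exact ⟨{ φ with commutes' := DFunLike.congr_fun hφ_coeff }, hφ 2, hφ 4⟩

lemma linearIndependent_one_x₅_x₉ : LinearIndependent CoeffRing ![(1 : W), x₅, x₉] := by
  obtain ⟨A, _, _, c, n, hc, hn, hli⟩ := exists_quadratic_tower (X 1 : CoeffRing)
    (-(X 0 ^ 2 * X 3 + X 1 * X 2)) (-(X 0 * X 1)) (-X 0 ^ 3)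
  let _ : Algebra (ZMod 2) A := Algebra.compHom A (algebraMap (ZMod 2) CoeffRing)
  have : IsScalarTower (ZMod 2) CoeffRing A := .of_algebraMap_eq fun _ => rfl
  obtain ⟨φ, hφc, hφn⟩ := exists_algHom_of_sq_eq hc hn
  have hφ : φ.toLinearMap ∘ ![1, x₅, x₉] = ![1, c, n] := by
    ext i : 1
    fin_cases i
    · exact map_one φ
    · exact hφc
    · exact hφn
  exact LinearIndependent.of_comp φ.toLinearMap (hφ ▸ hli)

theorem D_eq_zero_iff_mem_kernelSubalgebra {w : W} : D w = 0 ↔ w ∈ kernelSubalgebra := by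
  refine ⟨fun hw => ?_, D_eq_zero_of_mem_kernelSubalgebra⟩
  obtain ⟨y, u₀, u₁, v₀, v₁, rfl⟩ := exists_normal_form w
  have hbase : x₂ * y + algebraMap CoeffRing W u₀ ∈ kernelSubalgebra :=
    add_mem (x₂_mul_mem_kernelSubalgebra y) (algebraMap_mem_kernelSubalgebra u₀)
  rw [map_add, D_eq_zero_of_mem_kernelSubalgebra hbase, zero_add] at hw
  obtain ⟨s, hs⟩ := exists_smul_eq_of_derivation_eq_zero D
    (fun r => D_eq_zero_of_mem_kernelSubalgebra (algebraMap_mem_kernelSubalgebra r))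
    (p := X 0 ^ 2) (q := X 1) (by simp [D_x₅, algebraMap_X])
    (by simp [D_x₉, algebraMap_X]) linearIndependent_one_x₅_x₉
    (pow_ne_zero 2 (X_ne_zero 0)) (isRelPrime_X_X_of_ne zero_ne_one).pow_left hw
  have hgen : (X 0 ^ 2 : CoeffRing) • x₉ - (X 1 : CoeffRing) • x₅ =
      Ideal.Quotient.mk Jid (X 1 ^ 2 * X 4 + X 2 ^ 3) := by
    simp only [Algebra.smul_def, map_add, map_mul, map_pow, algebraMap_X, Matrix.cons_val]
    linear_combination - x₅ ^ 3 * two_eq_zero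
  rw [hs, hgen, Algebra.smul_def]
  exact add_mem hbase
    (mul_mem (algebraMap_mem_kernelSubalgebra s) (Algebra.subset_adjoin (by simp)))

end W

/-- ker D on W is the ℤ/2-subalgebra generated by x_2, x_3, x_8, x_{12}, x_5²,
and x_3²x_9 + x_5³. -/
theorem ker_D_eq_adjoin (Dbar : W →ₗ[ZMod 2] W)
    (hD : ∀ f : MvPolynomial (Fin 6) (ZMod 2),
      Dbar (Ideal.Quotient.mk Jid f) = Ideal.Quotient.mk Jid (Dder f)) :
    {w : W | Dbar w = 0} =
      (Algebra.adjoin (ZMod 2)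
        {Ideal.Quotient.mk Jid (X 0), Ideal.Quotient.mk Jid (X 1),
         Ideal.Quotient.mk Jid (X 3), Ideal.Quotient.mk Jid (X 5),
         Ideal.Quotient.mk Jid (X 2 ^ 2),
         Ideal.Quotient.mk Jid (X 1 ^ 2 * X 4 + X 2 ^ 3)} : Subalgebra (ZMod 2) W) := by
  ext w
  obtain ⟨f, rfl⟩ := Ideal.Quotient.mk_surjective w
  rw [Set.mem_ofPred_eq, hD, ← W.D_mk]
  exact W.D_eq_zero_iff_mem_kernelSubalgebra
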